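/- Suppose m≥N, k≥1, i_1=1, S_1(C)=dom(C), and i_{k+1} is a vertex of G with i_{k+1}>i_k that is a predecessor in G of some vertex i_ℓ∈dom(C) that is not bypassed in C. For each t∈{1,…,m} let D_t be the clause C∨¬p_{i_{k+1},t}. Then there exists t∈{1,…,m} such that S_1(D_t)={i_1,…,i_k,i_{k+1}}. -/

import Mathlib

open scoped Classical

/-! ### Clauses and literals -/

abbrev Lit (V : Type) := V × Bool
abbrev Clause (V : Type) := Finset (V × Bool)

/-- Propositional variables for the Stone principle: `p i j` and `r j`. -/
inductive SV where
  | p (i j : ℕ) : SV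
  | r (j : ℕ) : SV
deriving DecidableEq

/-- A dag on vertices `1,…,N` with unique sink `1`, in which every non-source vertex
(the vertices `1,…,n`) has exactly the two predecessors `p1 i` and `p2 i`,
every edge `(i′,i)` satisfies `i′ > i`, and the sources are exactly `n+1,…,N`. -/
structure StoneDag where
  N : ℕ
  n : ℕ
  p1 : ℕ → ℕ
  p2 : ℕ → ℕ
  n_lt_N : n < N
  p1_gt : ∀ i, 1 ≤ i → i ≤ n → i < p1 i
  p2_gt : ∀ i, 1 ≤ i → i ≤ n → i < p2 i
  p1_le : ∀ i, 1 ≤ i → i ≤ n → p1 i ≤ N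
  p2_le : ∀ i, 1 ≤ i → i ≤ n → p2 i ≤ N
  p_ne : ∀ i, 1 ≤ i → i ≤ n → p1 i ≠ p2 i
  unique_sink : ∀ i, 2 ≤ i → i ≤ N → ∃ v, 1 ≤ v ∧ v ≤ n ∧ (p1 v = i ∨ p2 v = i)

/-- The clause set `Stone(G,m)`. -/
def stoneClauses (G : StoneDag) (m : ℕ) : Set (Clause SV) :=
  { C | ∃ i, 1 ≤ i ∧ i ≤ G.N ∧
      C = (Finset.Icc 1 m).image (fun j => ((SV.p i j, true) : Lit SV)) } ∪
  { C | ∃ i j, G.n < i ∧ i ≤ G.N ∧ 1 ≤ j ∧ j ≤ m ∧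
      C = {(SV.p i j, false), (SV.r j, true)} } ∪
  { C | ∃ j, 1 ≤ j ∧ j ≤ m ∧ C = {(SV.p 1 j, false), (SV.r j, false)} } ∪
  { C | ∃ i j j' j'', 1 ≤ i ∧ i ≤ G.n ∧ 1 ≤ j ∧ j ≤ m ∧ 1 ≤ j' ∧ j' ≤ m ∧
      1 ≤ j'' ∧ j'' ≤ m ∧ j ≠ j' ∧ j ≠ j'' ∧
      C = {(SV.p (G.p1 i) j', false), (SV.r j', false),
           (SV.p (G.p2 i) j'', false), (SV.r j'', false),
           (SV.p i j, false), (SV.r j, true)} }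

/-! ### Resolution inference rules -/

/-- `(A ∖ {x}) ∪ (B ∖ {¬x})`. -/
def wres {V : Type} [DecidableEq V] (x : V) (A B : Clause V) : Clause V :=
  A.erase (x, true) ∪ B.erase (x, false)

/-- w-resolution inference. -/
def wstep {V : Type} [DecidableEq V] (x : V) (A B C : Clause V) : Prop :=
  C = wres x A B

/-- ordinary resolution inference. -/
def rstep {V : Type} [DecidableEq V] (x : V) (A B C : Clause V) : Prop :=
  (x, true) ∈ A ∧ (x, false) ∈ B ∧ C = wres x A B

/-- degenerate resolution inference. -/
def dstep {V : Type} [DecidableEq V] (x : V) (A B C : Clause V) : Prop :=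
  ((x, true) ∈ A ∧ (x, false) ∈ B ∧ C = wres x A B) ∨
  ((x, true) ∈ A ∧ (x, false) ∉ B ∧ C = B) ∨
  ((x, true) ∉ A ∧ (x, false) ∈ B ∧ C = A) ∨
  ((x, true) ∉ A ∧ (x, false) ∉ B ∧ (C = A ∨ C = B))

/-! ### Tree-like proofs -/

/-- Binary proof trees: each node is labeled with a clause, internal nodes also
with a resolution variable. -/
inductive PTree (V : Type) [DecidableEq V] where
  | leaf : Clause V → PTree V
  | node : Clause V → V → PTree V → PTree V → PTree V

namespace PTree

variable {V : Type} [DecidableEq V]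

/-- The clause labeling the root. -/
def clause : PTree V → Clause V
  | leaf c => c
  | node c _ _ _ => c

/-- Number of nodes. -/
def size : PTree V → ℕ
  | leaf _ => 1
  | node _ _ t1 t2 => t1.size + t2.size + 1

/-- The set of variables used as resolution variables. -/
def resVars : PTree V → Finset V
  | leaf _ => ∅
  | node _ x t1 t2 => insert x (t1.resVars ∪ t2.resVars)

/-- No variable is used as a resolution variable more than once on any
root-to-leaf path. -/
def regular : PTree V → Prop
  | leaf _ => True
  | node _ x t1 t2 => x ∉ t1.resVars ∧ x ∉ t2.resVars ∧ t1.regular ∧ t2.regular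

/-- Every internal node is obtained from its children by the inference `step`. -/
def wf (step : V → Clause V → Clause V → Clause V → Prop) : PTree V → Prop
  | leaf _ => True
  | node c x t1 t2 => step x t1.clause t2.clause c ∧ t1.wf step ∧ t2.wf step

/-- All clauses occurring in the tree. -/
def clauses : PTree V → Set (Clause V)
  | leaf c => {c}
  | node c _ t1 t2 => t1.clauses ∪ t2.clauses ∪ {c}

/-- Every leaf is labeled by a clause of `Γ` or by a clause occurring strictly
earlier in postorder; `S` is the set of clauses occurring before this subtree. -/
def lemmasOK (Γ : Set (Clause V)) : PTree V → Set (Clause V) → Prop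
  | leaf c, S => c ∈ Γ ∨ c ∈ S
  | node _ _ t1 t2, S => t1.lemmasOK Γ S ∧ t2.lemmasOK Γ (S ∪ t1.clauses)

/-- Every leaf is labeled by a clause of `Γ`. -/
def leavesIn (Γ : Set (Clause V)) : PTree V → Prop
  | leaf c => c ∈ Γ
  | node _ _ t1 t2 => t1.leavesIn Γ ∧ t2.leavesIn Γ

/-- Postorder scan computing, from the set `L` of clauses learned so far
(initially `Γ`), the pair of (i) the set of clauses learned after traversing the
subtree — a clause becomes learned when it is the final clause of an input
subderivation, i.e. a subderivation each of whose inferences has at least one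
hypothesis that is already learned — and (ii) whether this subtree is an input
subderivation. -/
def scan : PTree V → Set (Clause V) → Set (Clause V) × Prop
  | leaf _, L => (L, True)
  | node c _ t1 t2, L =>
      let r1 := t1.scan L
      let r2 := t2.scan r1.1
      let inp : Prop := r1.2 ∧ r2.2 ∧ (t1.clause ∈ r1.1 ∨ t2.clause ∈ r2.1)
      ({ d | d ∈ r2.1 ∨ (inp ∧ d = c) }, inp)

/-- Every leaf is labeled by a learned clause (a clause of the initial set `L`,
or one derived by an input subderivation strictly earlier in postorder). -/
def lemOK : PTree V → Set (Clause V) → Prop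
  | leaf c, L => c ∈ L
  | node _ _ t1 t2, L => t1.lemOK L ∧ t2.lemOK (t1.scan L).1

end PTree

/-- regWRTL refutation of `Γ`. -/
def RegWRTLRefutation {V : Type} [DecidableEq V] (Γ : Set (Clause V)) (T : PTree V) : Prop :=
  T.clause = ∅ ∧ T.wf wstep ∧ T.regular ∧ T.lemmasOK Γ ∅

/-- pool resolution refutation of `Γ`. -/
def PoolRefutation {V : Type} [DecidableEq V] (Γ : Set (Clause V)) (T : PTree V) : Prop :=
  T.clause = ∅ ∧ T.wf dstep ∧ T.regular ∧ T.lemmasOK Γ ∅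

/-- regRTL refutation of `Γ`. -/
def RegRTLRefutation {V : Type} [DecidableEq V] (Γ : Set (Clause V)) (T : PTree V) : Prop :=
  T.clause = ∅ ∧ T.wf rstep ∧ T.regular ∧ T.lemmasOK Γ ∅

/-- regRTI refutation of `Γ`: all lemmas are input lemmas. -/
def RegRTIRefutation {V : Type} [DecidableEq V] (Γ : Set (Clause V)) (T : PTree V) : Prop :=
  T.clause = ∅ ∧ T.wf rstep ∧ T.regular ∧ T.lemOK Γ

/-- regRTI derivation of the clause `D` from `Γ`. -/
def RegRTIDeriv {V : Type} [DecidableEq V] (Γ : Set (Clause V)) (D : Clause V)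
    (T : PTree V) : Prop :=
  T.clause = D ∧ T.wf rstep ∧ T.regular ∧ T.lemOK Γ ∧
  ∀ x ∈ T.resVars, (x, true) ∉ D ∧ (x, false) ∉ D

/-- regular tree-like resolution derivation of the clause `D` from `Γ`. -/
def RegTreeDeriv {V : Type} [DecidableEq V] (Γ : Set (Clause V)) (D : Clause V)
    (T : PTree V) : Prop :=
  T.clause = D ∧ T.wf rstep ∧ T.regular ∧ T.leavesIn Γ ∧
  ∀ x ∈ T.resVars, (x, true) ∉ D ∧ (x, false) ∉ D

/-! ### Dag-like derivations -/

/-- A dag-like resolution derivation: a sequence of `len` clauses, each an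
axiom (`just i = none`) or obtained by resolution from two earlier clauses. -/
structure DagDeriv (V : Type) [DecidableEq V] where
  len : ℕ
  cl : ℕ → Clause V
  just : ℕ → Option (ℕ × ℕ × V)

namespace DagDeriv

variable {V : Type} [DecidableEq V]

/-- Validity relative to the initial clause set `Γ`. -/
def ok (D : DagDeriv V) (Γ : Set (Clause V)) : Prop :=
  ∀ i, i < D.len →
    match D.just i with
    | none => D.cl i ∈ Γ
    | some (a, b, x) => a < i ∧ b < i ∧ rstep x (D.cl a) (D.cl b) (D.cl i)

/-- `j` is a premise of `i`. -/
def prem (D : DagDeriv V) (i j : ℕ) : Prop :=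
  ∃ a b x, D.just i = some (a, b, x) ∧ (j = a ∨ j = b)

/-- `j` lies in the subderivation of `i` (is reachable from `i` in the dag). -/
def reach (D : DagDeriv V) : ℕ → ℕ → Prop := Relation.ReflTransGen D.prem

/-- `x` is the resolution variable of the inference at `i`. -/
def resAt (D : DagDeriv V) (i : ℕ) (x : V) : Prop := ∃ a b, D.just i = some (a, b, x)

/-- No variable is used as resolution variable twice along a path of the dag. -/
def regular (D : DagDeriv V) : Prop :=
  ∀ i a b x, D.just i = some (a, b, x) →
    ∀ j, (D.reach a j ∨ D.reach b j) → ¬ D.resAt j x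

/-- The subderivation of `i` uses `x` as a resolution variable. -/
def usesVar (D : DagDeriv V) (i : ℕ) (x : V) : Prop := ∃ j, D.reach i j ∧ D.resAt j x

end DagDeriv

/-! ### Supports, bypassing, and the sets `B`, `B⁺`, `S_ℓ^B(C)` for a clause
`C = ¬p_{i_1,j_1} ∨ … ∨ ¬p_{i_k,j_k}` given by `k` and the functions
`I J : ℕ → ℕ` (with `I ℓ = i_ℓ`, `J ℓ = j_ℓ` for `1 ≤ ℓ ≤ k`). -/

/-- Index `ℓ` is bypassed. -/
def bypassed (k : ℕ) (J : ℕ → ℕ) (ℓ : ℕ) : Prop :=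
  ∃ ℓ', ℓ < ℓ' ∧ ℓ' ≤ k ∧ J ℓ' = J ℓ

/-- `ℓ'` is the max-bypasser of `ℓ`. -/
def maxByp (k : ℕ) (J : ℕ → ℕ) (ℓ ℓ' : ℕ) : Prop :=
  ℓ < ℓ' ∧ ℓ' ≤ k ∧ J ℓ' = J ℓ ∧ ∀ a, ℓ < a → a ≤ k → J a = J ℓ → a ≤ ℓ'

/-- `i_{ℓ'}` directly supports `i_ℓ`. -/
def dsup (G : StoneDag) (k : ℕ) (I J : ℕ → ℕ) (ℓ' ℓ : ℕ) : Prop :=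
  1 ≤ ℓ ∧ ℓ < ℓ' ∧ ℓ' ≤ k ∧
  (maxByp k J ℓ ℓ' ∨
    (¬ bypassed k J ℓ ∧ (I ℓ' = G.p1 (I ℓ) ∨ I ℓ' = G.p2 (I ℓ))))

/-- `i_a` supports `i_b`: reflexive transitive closure of direct support. -/
def supp (G : StoneDag) (k : ℕ) (I J : ℕ → ℕ) : ℕ → ℕ → Prop :=
  Relation.ReflTransGen (dsup G k I J)

/-- `dom(C)` as a set of vertices. -/
def domv (k : ℕ) (I : ℕ → ℕ) : Set ℕ := { v | ∃ a, 1 ≤ a ∧ a ≤ k ∧ I a = v }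

/-- `S_ℓ(C)`: the set of vertices of `dom(C)` supporting `i_ℓ`. -/
def suppSet (G : StoneDag) (k : ℕ) (I J : ℕ → ℕ) (ℓ : ℕ) : Set ℕ :=
  { v | ∃ a, 1 ≤ a ∧ a ≤ k ∧ I a = v ∧ supp G k I J a ℓ }

/-- `i_ℓ ∈ B`: not bypassed and some predecessor outside `dom(C)`. -/
def Bidx (G : StoneDag) (k : ℕ) (I J : ℕ → ℕ) (ℓ : ℕ) : Prop :=
  1 ≤ ℓ ∧ ℓ ≤ k ∧ ¬ bypassed k J ℓ ∧
  (G.p1 (I ℓ) ∉ domv k I ∨ G.p2 (I ℓ) ∉ domv k I)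

/-- `i_ℓ ∈ B₁`: exactly one predecessor outside `dom(C)`. -/
def B1idx (G : StoneDag) (k : ℕ) (I J : ℕ → ℕ) (ℓ : ℕ) : Prop :=
  Bidx G k I J ℓ ∧ (G.p1 (I ℓ) ∈ domv k I ∨ G.p2 (I ℓ) ∈ domv k I)

/-- `i_ℓ ∈ B₂`: both predecessors outside `dom(C)`. -/
def B2idx (G : StoneDag) (k : ℕ) (I J : ℕ → ℕ) (ℓ : ℕ) : Prop :=
  1 ≤ ℓ ∧ ℓ ≤ k ∧ ¬ bypassed k J ℓ ∧
  G.p1 (I ℓ) ∉ domv k I ∧ G.p2 (I ℓ) ∉ domv k I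

/-- `i_ℓ ∈ B⁺`: in `B`, or bypassed with max-bypasser in `B`. -/
def Bplus (G : StoneDag) (k : ℕ) (I J : ℕ → ℕ) (ℓ : ℕ) : Prop :=
  Bidx G k I J ℓ ∨ (1 ≤ ℓ ∧ ℓ ≤ k ∧ ∃ ℓ', maxByp k J ℓ ℓ' ∧ Bidx G k I J ℓ')

/-- Membership in `S_ℓ^B(C)` (on indices). -/
inductive SBmem (G : StoneDag) (k : ℕ) (I J : ℕ → ℕ) (ℓ : ℕ) : ℕ → Prop where
  | base : SBmem G k I J ℓ ℓ
  | byp (a b : ℕ) : SBmem G k I J ℓ a → (a = ℓ ∨ ¬ Bidx G k I J a) →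
      maxByp k J a b → ¬ Bidx G k I J b → SBmem G k I J ℓ b
  | pred (a b : ℕ) : SBmem G k I J ℓ a → (a = ℓ ∨ ¬ Bidx G k I J a) →
      ¬ bypassed k J a → 1 ≤ b → b ≤ k →
      (I b = G.p1 (I a) ∨ I b = G.p2 (I a)) → SBmem G k I J ℓ b

/-- The clause `C_ℓ`. -/
noncomputable def Clc (G : StoneDag) (k : ℕ) (I J : ℕ → ℕ) (ℓ : ℕ) : Clause SV :=
  ((Finset.Icc 1 k).filter fun a =>
      SBmem G k I J ℓ a ∧ ¬(a = ℓ ∧ bypassed k J ℓ)).image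
    fun a => ((SV.p (I a) (J a), false) : Lit SV)

/-- The clause `E_ℓ`. -/
noncomputable def Elc (G : StoneDag) (k : ℕ) (I J : ℕ → ℕ) (ℓ : ℕ) : Clause SV :=
  ((Finset.Icc 1 k).filter fun a =>
      SBmem G k I J ℓ a ∧ Bplus G k I J a ∧ (Bidx G k I J ℓ → a ≠ ℓ)).image
    fun a => ((SV.r (J a), false) : Lit SV)

/-- `t_1,…,t_r` enumerates the indices of `B ∪ {1}` in decreasing order. -/
def EnumB (G : StoneDag) (k : ℕ) (I J : ℕ → ℕ) (r : ℕ) (t : ℕ → ℕ) : Prop :=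
  (∀ q, 1 ≤ q → q ≤ r → (Bidx G k I J (t q) ∨ t q = 1)) ∧
  (∀ q q', 1 ≤ q → q < q' → q' ≤ r → t q' < t q) ∧
  (∀ ℓ, Bidx G k I J ℓ ∨ ℓ = 1 → ∃ q, 1 ≤ q ∧ q ≤ r ∧ t q = ℓ)

/-- The clause `F_q`. -/
noncomputable def Fcl (G : StoneDag) (k : ℕ) (I J : ℕ → ℕ) (r : ℕ) (t : ℕ → ℕ)
    (q : ℕ) : Clause SV :=
  if q = r ∧ ¬ Bidx G k I J 1 then Elc G k I J 1
  else (Finset.Icc 1 (q - 1)).image fun q' => ((SV.r (J (t q')), false) : Lit SV)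

/-- The standing hypotheses on the clause `C`: `k ≥ 1`, `1 = i_1 < … < i_k ≤ n`,
`j_ℓ ∈ {1,…,m}`, and every vertex of `dom(C)` supports vertex `1`. -/
def GoodC (G : StoneDag) (m k : ℕ) (I J : ℕ → ℕ) : Prop :=
  1 ≤ k ∧ I 1 = 1 ∧ I k ≤ G.n ∧
  (∀ a b, 1 ≤ a → a < b → b ≤ k → I a < I b) ∧
  (∀ a, 1 ≤ a → a ≤ k → 1 ≤ J a ∧ J a ≤ m) ∧
  (∀ a, 1 ≤ a → a ≤ k → supp G k I J a 1)

theorem bypassed_update_succ_iff {k ℓ t : ℕ} {J : ℕ → ℕ} (hℓ : 1 ≤ ℓ) (hℓk : ℓ ≤ k)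
    (ht : ∀ a, 1 ≤ a → a ≤ k → J a ≠ t) :
    bypassed (k + 1) (Function.update J (k + 1) t) ℓ ↔ bypassed k J ℓ := by
  have hne := ht ℓ hℓ hℓk
  constructor
  · rintro ⟨b, hb, hbk, hJ⟩
    rcases Nat.le_succ_iff.mp hbk with hbk | rfl
    · refine ⟨b, hb, hbk, ?_⟩
      rwa [Function.update_of_ne (by omega), Function.update_of_ne (by omega)] at hJ
    · rw [Function.update_self, Function.update_of_ne (by omega)] at hJ
      exact absurd hJ.symm hne
  · rintro ⟨b, hb, hbk, hJ⟩
    refine ⟨b, hb, by omega, ?_⟩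
    rwa [Function.update_of_ne (by omega), Function.update_of_ne (by omega)]

theorem maxByp.update_succ {k ℓ b t : ℕ} {J : ℕ → ℕ} (h : maxByp k J ℓ b) (hℓ : 1 ≤ ℓ)
    (ht : ∀ a, 1 ≤ a → a ≤ k → J a ≠ t) :
    maxByp (k + 1) (Function.update J (k + 1) t) ℓ b := by
  obtain ⟨hb, hbk, hJ, hmax⟩ := h
  have hne := ht ℓ hℓ (by omega)
  refine ⟨hb, by omega, ?_, fun a ha hak haJ => ?_⟩
  · rwa [Function.update_of_ne (by omega), Function.update_of_ne (by omega)]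
  · rcases Nat.le_succ_iff.mp hak with hak | rfl
    · rw [Function.update_of_ne (by omega), Function.update_of_ne (by omega)] at haJ
      exact hmax a ha hak haJ
    · rw [Function.update_self, Function.update_of_ne (by omega)] at haJ
      exact absurd haJ.symm hne

theorem dsup.update_succ {G : StoneDag} {k a b t : ℕ} {I J : ℕ → ℕ} (h : dsup G k I J a b)
    (ht : ∀ a, 1 ≤ a → a ≤ k → J a ≠ t) :
    dsup G (k + 1) I (Function.update J (k + 1) t) a b := by
  obtain ⟨hb, hba, hak, h⟩ := h
  refine ⟨hb, hba, by omega, h.imp (fun h => h.update_succ hb ht) ?_⟩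
  exact And.imp_left (bypassed_update_succ_iff hb (by omega) ht).not.mpr

/-- A support relation survives extending the clause by a literal with a fresh stone `t`. -/
theorem supp.update_succ {G : StoneDag} {k a b t : ℕ} {I J : ℕ → ℕ} (h : supp G k I J a b)
    (ht : ∀ a, 1 ≤ a → a ≤ k → J a ≠ t) :
    supp G (k + 1) I (Function.update J (k + 1) t) a b :=
  Relation.ReflTransGen.mono (fun _ _ (h : dsup G k I J _ _) => h.update_succ ht) a b h

theorem exists_stone_ne {m k : ℕ} (J : ℕ → ℕ) (hkm : k < m) :
    ∃ t, 1 ≤ t ∧ t ≤ m ∧ ∀ a, 1 ≤ a → a ≤ k → J a ≠ t := by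
  have hcard : ((Finset.Icc 1 k).image J).card < (Finset.Icc 1 m).card :=
    Finset.card_image_le.trans_lt (by simpa using hkm)
  obtain ⟨t, ht, htJ⟩ := Finset.exists_mem_notMem_of_card_lt_card hcard
  rw [Finset.mem_Icc] at ht
  exact ⟨t, ht.1, ht.2, fun a ha hak haJ =>
    htJ (Finset.mem_image.mpr ⟨a, Finset.mem_Icc.mpr ⟨ha, hak⟩, haJ⟩)⟩

/-- if `m ≥ N` then for some `t ∈ {1,…,m}`,
`S_1(D_t) = {i_1,…,i_k,i_{k+1}}`. -/
theorem extend_claim_union (G : StoneDag) (m k : ℕ) (I J : ℕ → ℕ)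
    (hm : G.N ≤ m) (hk : 1 ≤ k) (hI1 : I 1 = 1)
    (hmono : ∀ a b, 1 ≤ a → a < b → b ≤ k → I a < I b)
    (hIv : ∀ a, 1 ≤ a → a ≤ k → 1 ≤ I a ∧ I a ≤ G.N)
    (hJv : ∀ a, 1 ≤ a → a ≤ k → 1 ≤ J a ∧ J a ≤ m)
    (hsup : ∀ a, 1 ≤ a → a ≤ k → supp G k I J a 1)
    (hnew_vertex : 1 ≤ I (k + 1) ∧ I (k + 1) ≤ G.N)
    (hnew_gt : I k < I (k + 1))
    (hnew_pred : ∃ ℓ, 1 ≤ ℓ ∧ ℓ ≤ k ∧ 1 ≤ I ℓ ∧ I ℓ ≤ G.n ∧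
        ¬ bypassed k J ℓ ∧ (I (k + 1) = G.p1 (I ℓ) ∨ I (k + 1) = G.p2 (I ℓ))) :
    ∃ t, 1 ≤ t ∧ t ≤ m ∧
      suppSet G (k + 1) I (Function.update J (k + 1) t) 1 = domv (k + 1) I := by
  have hle : ∀ a, 1 ≤ a → a ≤ k → a ≤ I a := by
    intro a ha
    induction a, ha using Nat.le_induction with
    | base => intro _; omega
    | succ a ha ih =>
      intro hak
      have := ih (by omega)
      have := hmono a (a + 1) ha (by omega) hak
      omega
  have hkI := hle k hk le_rfl
  obtain ⟨t, ht1, htm, ht⟩ := exists_stone_ne J (show k < m by omega)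
  refine ⟨t, ht1, htm, Set.ext fun v => ⟨?_, ?_⟩⟩
  · rintro ⟨a, ha, hak, rfl, -⟩
    exact ⟨a, ha, hak, rfl⟩
  · rintro ⟨a, ha, hak, rfl⟩
    refine ⟨a, ha, hak, rfl, ?_⟩
    rcases Nat.le_succ_iff.mp hak with hak | rfl
    · exact (hsup a ha hak).update_succ ht
    · obtain ⟨ℓ, hℓ, hℓk, -, -, hbyp, hpred⟩ := hnew_pred
      refine Relation.ReflTransGen.head ?_ ((hsup ℓ hℓ hℓk).update_succ ht)
      exact ⟨hℓ, by omega, le_rfl,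
        Or.inr ⟨(bypassed_update_succ_iff hℓ hℓk ht).not.mpr hbyp, hpred⟩⟩
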